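/- arXiv:1505.02315 — 2 statements merged into one kernel-verified Lean document; each statement's English description precedes it below -/
import Mathlib

section
/- Let U and V be finite-dimensional vector spaces over the field K with exactly 2 elements, and let S be a linear subspace of L(U,V) with codim S ≤ 2·dim V − 6. Then either S has special type 1 or special type 2, or every quasi-range-compatible additive group homomorphism F : S → V is local. -/
/-!
Write `T` for the orthogonal of `S` in `L(V, U)` under the trace pairing, so that `dim T = codim S`.
If `F` is quasi-range-compatible with respect to `Kd` and `y` is a nonzero vector with `d ∉ Ky`,
then `F` induces a quasi-range-compatible map on the space `S mod y` of operators from `U` to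
`V ⧸ Ky`, whose codimension is `dim T - dim Ty`. If two such vectors `y₁ ≠ y₂` make the induced maps
local at `x₁` and `x₂`, then `S(x₁ - x₂)` lies in the plane spanned by `y₁` and `y₂`. As `S` has
neither special type, `S(x₁ - x₂) = 0`, and `F` is local at `x₁`.

It remains to find enough vectors `y` for which `S mod y` satisfies the induction hypothesis: it
suffices that `dim Ty ≥ 2` and that `y` avoids every 3-dimensional space `Sx`. Either such `y`
include all the points where some nonzero quadratic form does not vanish, or `S` is the space of all
operators killing a given vector. A nonzero quadratic form over the field with two elements takes
the value 1 at four or more vectors as soon as the dimension is at least 4. For the space of all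
operators killing a vector, the rank-one operators determine `F`. When `codim S ≤ dim V - 3`,
neither special type can occur, and `dim Ty ≥ 1` is enough to preserve this bound.
-/

open Module
open LinearMap (applyₗ)

namespace OperatorSpace

section LinearAlgebra

variable {K E W : Type*} [Field K] [AddCommGroup E] [Module K E] [AddCommGroup W] [Module K W]

lemma exists_dual_apply_eq_one_le_ker {p : Submodule K E} {v : E} (hv : v ∉ p) :
    ∃ φ : Dual K E, φ v = 1 ∧ p ≤ φ.ker := by
  obtain ⟨f, hfv, hpf⟩ := p.exists_le_ker_of_notMem hv
  refine ⟨(f v)⁻¹ • f, inv_mul_cancel₀ hfv, fun w hw ↦ ?_⟩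
  simp [LinearMap.mem_ker.mp (hpf hw)]

lemma exists_notMem_notMem {p q : Submodule K E} (hp : p ≠ ⊤) (hq : q ≠ ⊤) :
    ∃ v, v ∉ p ∧ v ∉ q := by
  obtain ⟨a, ha⟩ := SetLike.exists_not_mem_of_ne_top p hp rfl
  obtain ⟨b, hb⟩ := SetLike.exists_not_mem_of_ne_top q hq rfl
  by_cases haq : a ∈ q
  · by_cases hbp : b ∈ p
    · exact ⟨a + b, (p.add_mem_iff_left hbp).not.mpr ha, (q.add_mem_iff_right haq).not.mpr hb⟩
    · exact ⟨b, hbp, hb⟩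
  · exact ⟨a, ha, haq⟩

lemma linMulLin_ne_zero {φ ψ : Dual K E} (hφ : φ ≠ 0) (hψ : ψ ≠ 0) :
    QuadraticMap.linMulLin φ ψ ≠ 0 := by
  obtain ⟨v, hφv, hψv⟩ := exists_notMem_notMem (LinearMap.ker_eq_top.not.mpr hφ)
    (LinearMap.ker_eq_top.not.mpr hψ)
  exact fun h ↦ mul_ne_zero hφv hψv (DFunLike.congr_fun h v)

lemma exists_comp_eq_of_ker_le_ker {E' : Type*} [AddCommGroup E'] [Module K E']
    {p : E →ₗ[K] W} (hp : Function.Surjective p) {f : E →ₗ[K] E'} (hpf : p.ker ≤ f.ker) :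
    ∃ g : W →ₗ[K] E', g ∘ₗ p = f := by
  obtain ⟨σ, hσ⟩ := p.exists_rightInverse_of_surjective (LinearMap.range_eq_top.mpr hp)
  refine ⟨f ∘ₗ σ, LinearMap.ext fun v ↦ LinearMap.sub_mem_ker_iff.mp (hpf ?_)⟩
  exact LinearMap.sub_mem_ker_iff.mpr (DFunLike.congr_fun hσ (p v))

lemma finrank_span_singleton_le_one (y : E) : finrank K (K ∙ y) ≤ 1 :=
  (finrank_span_le_card {y}).trans_eq (by simp)

lemma two_le_finrank_of_notMem_span {P : Submodule K E} [FiniteDimensional K P] {u v : E}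
    (hu : u ∈ P) (hv : v ∈ P) (hu0 : u ≠ 0) (hvu : v ∉ K ∙ u) : 2 ≤ finrank K P := by
  have hlt : (K ∙ u) < P := SetLike.lt_iff_le_and_exists.mpr
    ⟨(Submodule.span_singleton_le_iff_mem u P).mpr hu, v, hv, hvu⟩
  exact (finrank_span_singleton (K := K) hu0).symm.trans_lt (Submodule.finrank_lt_finrank_of_lt hlt)

lemma mem_span_singleton_of_finrank_le_one {P : Submodule K E} [FiniteDimensional K P] {u v : E}
    (hP : finrank K P ≤ 1) (hu : u ∈ P) (hv : v ∈ P) (hu0 : u ≠ 0) : v ∈ K ∙ u :=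
  of_not_not fun hvu ↦ hP.not_gt (two_le_finrank_of_notMem_span hu hv hu0 hvu)

lemma two_le_finrank_of_det_ne_zero {P : Submodule K E} [FiniteDimensional K P] {u v : E}
    (hu : u ∈ P) (hv : v ∈ P) {f g : Dual K E}
    (hdet : f u * g v - f v * g u ≠ 0) : 2 ≤ finrank K P := by
  refine two_le_finrank_of_notMem_span hu hv (by rintro rfl; simp at hdet) fun hvu ↦ hdet ?_
  obtain ⟨c, rfl⟩ := Submodule.mem_span_singleton.mp hvu
  simp only [map_smul, smul_eq_mul]
  ring

variable [FiniteDimensional K E]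

lemma finrank_map_add_finrank_inf_ker (S : Submodule K E) (f : E →ₗ[K] W) :
    finrank K (S.map f) + finrank K (S ⊓ f.ker : Submodule K E) = finrank K S := by
  rw [← (f.domRestrict S).finrank_range_add_finrank_ker, LinearMap.range_domRestrict,
    LinearMap.ker_domRestrict, ← Submodule.map_comap_subtype, Submodule.finrank_map_subtype_eq]

lemma finrank_add_finrank_le_finrank_map_add {f : E →ₗ[K] W} (hf : Function.Surjective f)
    (S : Submodule K E) :
    finrank K S + finrank K W ≤ finrank K (S.map f) + finrank K E := by
  have hE := f.finrank_range_add_finrank_ker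
  rw [f.range_eq_top.mpr hf, finrank_top] at hE
  have hS := finrank_map_add_finrank_inf_ker S f
  have hker : finrank K (S ⊓ f.ker : Submodule K E) ≤ finrank K f.ker :=
    Submodule.finrank_mono inf_le_right
  omega

lemma eq_comap_of_finrank_add_le {f : E →ₗ[K] W} (hf : Function.Surjective f)
    {S : Submodule K E} {P : Submodule K W} (hSP : S.map f ≤ P)
    (hle : finrank K E + finrank K P ≤ finrank K S + finrank K W) : S = P.comap f := by
  have : Module.Finite K W := .of_surjective f hf
  refine Submodule.eq_of_le_of_finrank_le (Submodule.map_le_iff_le_comap.mp hSP) ?_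
  have hcomap := finrank_add_finrank_le_finrank_map_add hf (P.comap f)
  rw [Submodule.map_comap_eq_of_surjective hf] at hcomap
  omega

lemma finrank_prod_submodule_le [FiniteDimensional K W] (p : Submodule K E) (q : Submodule K W) :
    finrank K (p.prod q) ≤ finrank K p + finrank K q := by
  have hrange : (p.subtype.prodMap q.subtype).range = p.prod q := by
    rw [LinearMap.range_prodMap, p.range_subtype, q.range_subtype]
  rw [← hrange, ← finrank_prod]
  exact LinearMap.finrank_range_le _

lemma finrank_le_finrank_map_mkQ_add_one (P : Submodule K E) (y : E) :
    finrank K P ≤ finrank K (P.map (K ∙ y).mkQ) + 1 := by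
  have hP := finrank_map_add_finrank_inf_ker P (K ∙ y).mkQ
  have hker : finrank K (P ⊓ (K ∙ y) : Submodule K E) ≤ 1 :=
    (Submodule.finrank_mono inf_le_right).trans
      (finrank_span_singleton_le_one y)
  rw [Submodule.ker_mkQ] at hP
  omega

lemma finrank_map_mkQ_of_notMem {P : Submodule K E} {y : E} (hy : y ∉ P) :
    finrank K (P.map (K ∙ y).mkQ) = finrank K P := by
  rw [← finrank_map_add_finrank_inf_ker P (K ∙ y).mkQ, Submodule.ker_mkQ,
    (Submodule.disjoint_span_singleton_of_notMem hy).eq_bot, finrank_bot, add_zero]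

lemma finrank_quotient_span_singleton_add_one {y : E} (hy : y ≠ 0) :
    finrank K (E ⧸ (K ∙ y)) + 1 = finrank K E := by
  rw [← finrank_span_singleton (K := K) hy, Submodule.finrank_quotient_add_finrank]

end LinearAlgebra

section QuadraticForm

variable {K V : Type*} [Field K] [AddCommGroup V] [Module K V] [FiniteDimensional K V]

/- If `Q v ≠ 0` and `w` is polar-orthogonal to `v`, then `Q (v + w) = Q v + Q w`, so `Q` cannot
vanish at both `w` and `v + w`. -/
lemma natCard_le_two_mul_natCard_mul_ncard_ne_zero [Finite K] {Q : QuadraticForm K V}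
    (hQ : Q ≠ 0) : Nat.card V ≤ 2 * Nat.card K * {y | Q y ≠ 0}.ncard := by
  have : Finite V := Module.finite_of_finite K
  obtain ⟨v, hv⟩ := DFunLike.ne_iff.mp hQ
  set H := (Q.polarBilin v).ker
  have hfinrank : finrank K V ≤ finrank K H + 1 := by
    have hle := (Submodule.finrank_le (Q.polarBilin v).range).trans_eq (finrank_self K)
    have hadd : _ + finrank K H = _ := (Q.polarBilin v).finrank_range_add_finrank_ker
    omega
  have hcover : (H : Set V) ⊆ {y | Q y ≠ 0} ∪ (· - v) '' {y | Q y ≠ 0} := by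
    intro w hw
    have hvw : Q (v + w) = Q v + Q w := by
      have hpolar : Q (v + w) - Q v - Q w = 0 := hw
      linear_combination hpolar
    by_cases hQw : Q w = 0
    · exact .inr ⟨v + w, by simpa [hvw, hQw] using hv, add_sub_cancel_left v w⟩
    · exact .inl hQw
  have hcard : Nat.card H ≤ 2 * {y | Q y ≠ 0}.ncard :=
    calc Nat.card H ≤ ({y | Q y ≠ 0} ∪ (· - v) '' {y | Q y ≠ 0}).ncard :=
        Set.ncard_le_ncard hcover
      _ ≤ {y | Q y ≠ 0}.ncard + {y | Q y ≠ 0}.ncard :=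
        (Set.ncard_union_le _ _).trans
          (Nat.add_le_add_left (Set.ncard_image_le (Set.toFinite _)) _)
      _ = 2 * {y | Q y ≠ 0}.ncard := (two_mul _).symm
  calc Nat.card V = Nat.card K ^ finrank K V := Module.natCard_eq_pow_finrank
    _ ≤ Nat.card K ^ (finrank K H + 1) := Nat.pow_le_pow_right Nat.card_pos hfinrank
    _ = Nat.card K * Nat.card H := by
      rw [pow_succ', Module.natCard_eq_pow_finrank (K := K) (V := H)]
    _ ≤ Nat.card K * (2 * {y | Q y ≠ 0}.ncard) := Nat.mul_le_mul_left _ hcard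
    _ = 2 * Nat.card K * {y | Q y ≠ 0}.ncard := by ring

lemma two_pow_le_ncard_ne_zero (hK : Nat.card K = 2) {Q : QuadraticForm K V} (hQ : Q ≠ 0) {n : ℕ}
    (hn : n + 2 ≤ finrank K V) : 2 ^ n ≤ {y | Q y ≠ 0}.ncard := by
  have : Finite K := Nat.finite_of_card_ne_zero (by omega)
  have hcard := natCard_le_two_mul_natCard_mul_ncard_ne_zero hQ
  rw [Module.natCard_eq_pow_finrank (K := K), hK] at hcard
  have hpow : 2 ^ (n + 2) ≤ 2 ^ finrank K V := Nat.pow_le_pow_right two_pos hn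
  rw [pow_add] at hpow
  omega

lemma exists_pair_ne_zero_of_card_eq_two (hK : Nat.card K = 2) {Q : QuadraticForm K V} (hQ : Q ≠ 0)
    (hV : 4 ≤ finrank K V) (d : V) :
    ∃ y₁ y₂, y₁ ≠ y₂ ∧ y₁ ≠ d ∧ y₂ ≠ d ∧ Q y₁ ≠ 0 ∧ Q y₂ ≠ 0 := by
  have hcard : 1 < ({y | Q y ≠ 0} \ {d}).ncard := by
    have hle := Set.ncard_le_ncard_sdiff_add_ncard {y | Q y ≠ 0} {d}
    have hpow := two_pow_le_ncard_ne_zero hK hQ (n := 2) hV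
    rw [Set.ncard_singleton] at hle
    omega
  obtain ⟨y₁, ⟨hQ₁, hd₁⟩, y₂, ⟨hQ₂, hd₂⟩, hne⟩ :=
    (Set.one_lt_ncard (Set.finite_of_ncard_pos (by omega))).mp hcard
  exact ⟨y₁, y₂, hne, hd₁, hd₂, hQ₁, hQ₂⟩

lemma eq_zero_of_forall_ne_of_card_eq_two (hK : Nat.card K = 2) {Q : QuadraticForm K V}
    (hV : 3 ≤ finrank K V) {d : V} (hQ : ∀ y ≠ d, Q y = 0) : Q = 0 := by
  by_contra hQ0
  have hsubset : {y | Q y ≠ 0} ⊆ {d} := fun y hy ↦ not_imp_comm.mp (hQ y) hy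
  have hle := Set.ncard_le_ncard hsubset
  have hpow := two_pow_le_ncard_ne_zero hK hQ0 (n := 1) hV
  rw [Set.ncard_singleton] at hle
  omega

/- The 2 × 2 minors of the pair `(y, g y)` are quadratic forms in `y` vanishing off `d`, hence
everywhere. -/
lemma exists_forall_eq_smul_of_forall_ne_mem_span (hK : Nat.card K = 2) (hV : 3 ≤ finrank K V)
    {g : V →ₗ[K] V} {d : V} (hg : ∀ y ≠ d, g y ∈ K ∙ y) : ∃ c : K, ∀ y, g y = c • y := by
  have hdet (φ ψ : Dual K V) (y : V) : φ y * ψ (g y) = φ (g y) * ψ y := by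
    refine sub_eq_zero.mp (DFunLike.congr_fun (eq_zero_of_forall_ne_of_card_eq_two hK hV (d := d)
      (Q := .linMulLin φ (ψ ∘ₗ g) - .linMulLin (φ ∘ₗ g) ψ) fun z hz ↦ ?_) y)
    obtain ⟨c, hc⟩ := Submodule.mem_span_singleton.mp (hg z hz)
    simp only [sub_apply, QuadraticMap.linMulLin_apply, LinearMap.comp_apply, ← hc, map_smul,
      smul_eq_mul]
    ring
  obtain ⟨c, hc⟩ := LinearMap.exists_eq_smul_id_of_forall_notLinearIndependent (f := g) fun y ↦ by
    by_cases hy : y = 0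
    · simp [hy, linearIndependent_fin2]
    obtain ⟨φ, hφ⟩ := Module.Projective.exists_dual_ne_zero K hy
    have hgy : φ y • g y = φ (g y) • y := by
      rw [← sub_eq_zero, ← forall_dual_apply_eq_zero_iff K]
      intro ψ
      simp [hdet φ ψ y]
    rw [LinearIndependent.pair_iff]
    intro hindep
    exact hφ (neg_eq_zero.mp (hindep (φ (g y)) (-φ y) (by rw [neg_smul, hgy, add_neg_cancel])).2)
  exact ⟨c, fun y ↦ by simp [hc]⟩

end QuadraticForm

section OperatorSpaces

variable {K U V W : Type*} [Field K] [AddCommGroup U] [Module K U] [AddCommGroup V] [Module K V]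
  [AddCommGroup W] [Module K W]

/-- The space `Sx` of all values at `x` of the operators in `S`. -/
abbrev valueSpace (S : Submodule K (U →ₗ[K] V)) (x : U) : Submodule K V :=
  S.map (applyₗ x)

/-- `S` has neither special type 1 nor special type 2: each `Sx` is zero or has dimension at
least 3. -/
def IsNonspecial (S : Submodule K (U →ₗ[K] V)) : Prop :=
  ∀ x, valueSpace S x = ⊥ ∨ 3 ≤ finrank K (valueSpace S x)

/-- The operator space `{π ∘ s | s ∈ S}`. -/
def postcomp (π : V →ₗ[K] W) (S : Submodule K (U →ₗ[K] V)) : Submodule K (U →ₗ[K] W) :=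
  S.map (π.compRight K)

/-- The map `s ↦ π ∘ s` from `S` to `postcomp π S`. -/
def toPostcomp (π : V →ₗ[K] W) (S : Submodule K (U →ₗ[K] V)) : S →ₗ[K] postcomp π S :=
  (π.compRight K).submoduleMap S

/-- The operator space `S mod y`, obtained by composing the operators in `S` with the projection
onto `V ⧸ Ky`. -/
abbrev modSpan (S : Submodule K (U →ₗ[K] V)) (y : V) : Submodule K (U →ₗ[K] V ⧸ (K ∙ y)) :=
  postcomp (K ∙ y).mkQ S

/-- The pairing `(t, s) ↦ tr (t ∘ s)` between `L(V, U)` and `L(U, V)`. -/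
noncomputable def tracePairing (K U V : Type*) [Field K] [AddCommGroup U] [Module K U]
    [AddCommGroup V] [Module K V] : (V →ₗ[K] U) →ₗ[K] Dual K (U →ₗ[K] V) :=
  (LinearMap.llcomp K U V U).compr₂ (LinearMap.trace K U)

/-- The orthogonal of `S` in `L(V, U)` for the trace pairing; its dimension is the codimension of
`S`. -/
noncomputable def traceOrthogonal (S : Submodule K (U →ₗ[K] V)) : Submodule K (V →ₗ[K] U) :=
  S.dualAnnihilator.comap (tracePairing K U V)

/-- `F` is quasi-range-compatible with respect to the line spanned by `d`. -/
def IsQuasiRangeCompatible {S : Submodule K (U →ₗ[K] V)} (F : S →ₗ[K] V) (d : V) : Prop :=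
  ∀ s : S, d ∉ (s : U →ₗ[K] V).range → F s ∈ (s : U →ₗ[K] V).range

/-- `F` is the evaluation at some vector. -/
def IsLocal {S : Submodule K (U →ₗ[K] V)} (F : S →ₗ[K] V) : Prop :=
  ∃ x, ∀ s : S, F s = (s : U →ₗ[K] V) x

/-- Every quasi-range-compatible linear map on `S` is local. Vectors `d = 0` do not span a line and
are excluded. -/
def ForcesLocality (S : Submodule K (U →ₗ[K] V)) : Prop :=
  ∀ (F : S →ₗ[K] V) (d : V), d ≠ 0 → IsQuasiRangeCompatible F d → IsLocal F

variable {S : Submodule K (U →ₗ[K] V)} {x : U} {y d : V} {π : V →ₗ[K] W}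

lemma valueSpace_eq_bot_iff : valueSpace S x = ⊥ ↔ ∀ s ∈ S, s x = 0 := by
  simp [Submodule.eq_bot_iff]

lemma mem_traceOrthogonal {t : V →ₗ[K] U} :
    t ∈ traceOrthogonal S ↔ ∀ s ∈ S, LinearMap.trace K U (t ∘ₗ s) = 0 :=
  Submodule.mem_dualAnnihilator _

lemma mem_traceOrthogonal_postcomp {t : W →ₗ[K] U} :
    t ∈ traceOrthogonal (postcomp π S) ↔ t ∘ₗ π ∈ traceOrthogonal S := by
  simp only [mem_traceOrthogonal, postcomp, Submodule.mem_map, forall_exists_index, and_imp,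
    forall_apply_eq_imp_iff₂, LinearMap.comp_assoc]
  rfl

lemma valueSpace_postcomp : valueSpace (postcomp π S) x = (valueSpace S x).map π := by
  simp only [valueSpace, postcomp, ← Submodule.map_comp]
  rfl

lemma toPostcomp_surjective : Function.Surjective (toPostcomp π S) :=
  LinearMap.submoduleMap_surjective _ S

lemma exists_linearMap_postcomp {F : S →ₗ[K] V} (hF : IsQuasiRangeCompatible F d)
    (hd : d ∉ π.ker) :
    ∃ F' : postcomp π S →ₗ[K] W, ∀ s : S, F' (toPostcomp π S s) = π (F s) := by
  have hker : (toPostcomp π S).ker ≤ (π ∘ₗ F).ker := fun s hs ↦ by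
    have hrange : (s : U →ₗ[K] V).range ≤ π.ker :=
      LinearMap.range_le_ker_iff.mpr (congrArg Subtype.val hs)
    exact hrange (hF s fun hds ↦ hd (hrange hds))
  obtain ⟨F', hF'⟩ := exists_comp_eq_of_ker_le_ker toPostcomp_surjective hker
  exact ⟨F', DFunLike.congr_fun hF'⟩

lemma exists_forall_sub_mem_ker_of_forcesLocality_postcomp (hS : ForcesLocality (postcomp π S))
    {F : S →ₗ[K] V} (hF : IsQuasiRangeCompatible F d) (hd : d ∉ π.ker) :
    ∃ x, ∀ s : S, F s - (s : U →ₗ[K] V) x ∈ π.ker := by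
  obtain ⟨F', hF'⟩ := exists_linearMap_postcomp hF hd
  have hF'd : IsQuasiRangeCompatible F' (π d) := by
    intro s' hs'
    obtain ⟨s, rfl⟩ := toPostcomp_surjective s'
    have hFs : F s ∈ (s : U →ₗ[K] V).range := by
      refine hF s fun hds ↦ hs' ?_
      obtain ⟨x, hx⟩ := hds
      exact ⟨x, congrArg π hx⟩
    obtain ⟨x, hx⟩ := hFs
    rw [hF']
    exact ⟨x, congrArg π hx⟩
  obtain ⟨x, hx⟩ := hS F' _ hd hF'd
  exact ⟨x, fun s ↦ LinearMap.sub_mem_ker_iff.mpr ((hF' s).symm.trans (hx _))⟩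

lemma isNonspecial_of_forall_finrank_ne [FiniteDimensional K V]
    (hS : ∀ x, finrank K (valueSpace S x) ≠ 1 ∧ finrank K (valueSpace S x) ≠ 2) :
    IsNonspecial S := by
  intro x
  obtain ⟨hx₁, hx₂⟩ := hS x
  rw [← Submodule.finrank_eq_zero]
  omega

lemma IsNonspecial.eq_bot_of_finrank_le (hS : IsNonspecial S) (h : finrank K (valueSpace S x) ≤ 2) :
    valueSpace S x = ⊥ :=
  (hS x).resolve_right (by omega)

lemma smulRight_mem_traceOrthogonal [FiniteDimensional K U] {φ : Dual K V} :
    φ.smulRight x ∈ traceOrthogonal S ↔ ∀ s ∈ S, φ (s x) = 0 := by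
  have htrace (s : U →ₗ[K] V) : LinearMap.trace K U (φ.smulRight x ∘ₗ s) = φ (s x) :=
    LinearMap.trace_smulRight (φ ∘ₗ s) x
  simp only [mem_traceOrthogonal, htrace]

lemma isLocal_of_forcesLocality_modSpan (hS : IsNonspecial S) {y₁ y₂ : V}
    (hdisj : Disjoint (K ∙ y₁) (K ∙ y₂)) (hS₁ : ForcesLocality (modSpan S y₁))
    (hS₂ : ForcesLocality (modSpan S y₂)) {F : S →ₗ[K] V} (hF : IsQuasiRangeCompatible F d)
    (hd₁ : d ∉ K ∙ y₁) (hd₂ : d ∉ K ∙ y₂) : IsLocal F := by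
  obtain ⟨x₁, hx₁⟩ := exists_forall_sub_mem_ker_of_forcesLocality_postcomp hS₁ hF
    (by rwa [Submodule.ker_mkQ])
  obtain ⟨x₂, hx₂⟩ := exists_forall_sub_mem_ker_of_forcesLocality_postcomp hS₂ hF
    (by rwa [Submodule.ker_mkQ])
  simp only [Submodule.ker_mkQ] at hx₁ hx₂
  have hle : valueSpace S (x₂ - x₁) ≤ (K ∙ y₁) ⊔ (K ∙ y₂) := by
    rintro _ ⟨s, hs, rfl⟩
    have hsub : (F ⟨s, hs⟩ - s x₁) - (F ⟨s, hs⟩ - s x₂) = s (x₂ - x₁) := by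
      rw [map_sub, sub_sub_sub_cancel_left]
    exact hsub ▸ Submodule.sub_mem_sup (hx₁ ⟨s, hs⟩) (hx₂ ⟨s, hs⟩)
  have hbot : valueSpace S (x₂ - x₁) = ⊥ := by
    refine hS.eq_bot_of_finrank_le ((Submodule.finrank_mono hle).trans ?_)
    exact (Submodule.finrank_add_le_finrank_add_finrank _ _).trans
      (Nat.add_le_add (finrank_span_singleton_le_one y₁) (finrank_span_singleton_le_one y₂))
  refine ⟨x₁, fun s ↦ sub_eq_zero.mp (Submodule.disjoint_def.mp hdisj _ (hx₁ s) ?_)⟩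
  have hs : (s : U →ₗ[K] V) x₂ - (s : U →ₗ[K] V) x₁ = 0 := by
    rw [← map_sub]
    exact valueSpace_eq_bot_iff.mp hbot s s.2
  rw [← sub_eq_zero.mp hs]
  exact hx₂ s

section FiniteDimensional

variable [FiniteDimensional K V]

lemma IsNonspecial.modSpan (hS : IsNonspecial S)
    (hy : ∀ x, finrank K (valueSpace S x) = 3 → y ∉ valueSpace S x) :
    IsNonspecial (modSpan S y) := by
  intro x
  rw [valueSpace_postcomp]
  rcases hS x with hx | hx
  · exact .inl (by rw [hx, Submodule.map_bot])
  · right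
    by_cases hx3 : finrank K (valueSpace S x) = 3
    · rw [finrank_map_mkQ_of_notMem (hy x hx3), hx3]
    · have := finrank_le_finrank_map_mkQ_add_one (valueSpace S x) y
      omega

variable [FiniteDimensional K U]

lemma tracePairing_bijective : Function.Bijective (tracePairing K U V) := by
  have hinj : Function.Injective (tracePairing K U V) := by
    refine (injective_iff_map_eq_zero _).mpr fun t ht ↦ LinearMap.ext fun y ↦ ?_
    refine (forall_dual_apply_eq_zero_iff K _).mp fun φ ↦ ?_
    have htrace : tracePairing K U V t (φ.smulRight y) = φ (t y) := by
      have hcomp : t ∘ₗ φ.smulRight y = φ.smulRight (t y) := by ext; simp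
      exact (congrArg (LinearMap.trace K U) hcomp).trans (LinearMap.trace_smulRight φ (t y))
    rw [← htrace, ht, LinearMap.zero_apply]
  have hfinrank : finrank K (V →ₗ[K] U) = finrank K (Dual K (U →ₗ[K] V)) := by
    rw [Subspace.dual_finrank_eq, finrank_linearMap, finrank_linearMap, mul_comm]
  exact ⟨hinj, (LinearMap.injective_iff_surjective_of_finrank_eq_finrank hfinrank).mp hinj⟩

lemma finrank_add_finrank_traceOrthogonal (S : Submodule K (U →ₗ[K] V)) :
    finrank K S + finrank K (traceOrthogonal S) = finrank K (U →ₗ[K] V) := by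
  have hmap : (traceOrthogonal S).map (tracePairing K U V) = S.dualAnnihilator :=
    Submodule.map_comap_eq_of_surjective tracePairing_bijective.2 _
  rw [← Subspace.finrank_add_finrank_dualAnnihilator_eq S, ← hmap,
    (Submodule.equivMapOfInjective _ tracePairing_bijective.1 (traceOrthogonal S)).finrank_eq]

lemma finrank_traceOrthogonal_modSpan_add_le (S : Submodule K (U →ₗ[K] V)) (y : V) :
    finrank K (traceOrthogonal (modSpan S y)) + finrank K (valueSpace (traceOrthogonal S) y) ≤
      finrank K (traceOrthogonal S) := by
  have hinj : Function.Injective (LinearMap.lcomp K U (K ∙ y).mkQ) := fun t t' h ↦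
    (LinearMap.cancel_right (K ∙ y).mkQ_surjective).mp h
  have hle : (traceOrthogonal (modSpan S y)).map (LinearMap.lcomp K U (K ∙ y).mkQ) ≤
      traceOrthogonal S ⊓ (applyₗ y).ker := by
    rintro _ ⟨t, ht, rfl⟩
    exact ⟨mem_traceOrthogonal_postcomp.mp ht,
      by simp [(Submodule.Quotient.mk_eq_zero _).mpr (Submodule.mem_span_singleton_self y)]⟩
  rw [← finrank_map_add_finrank_inf_ker (traceOrthogonal S) (applyₗ y),
    (Submodule.equivMapOfInjective _ hinj _).finrank_eq, add_comm]
  exact Nat.add_le_add_left (Submodule.finrank_mono hle) _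

end FiniteDimensional

end OperatorSpaces

section RankOne

variable {K E W : Type*} [Field K] [AddCommGroup E] [Module K E] [AddCommGroup W] [Module K W]
  {T : Submodule K (E →ₗ[K] W)}

lemma exists_eq_smul_and_eq_smul_of_mem_span {s t : E →ₗ[K] W} {y₁ y₂ : E} (hy₁ : t y₁ ≠ 0)
    (hy₂ : t y₂ ∉ K ∙ t y₁) (hs₁ : s y₁ ∈ K ∙ t y₁) (hs₂ : s y₂ ∈ K ∙ t y₂)
    (hs : s (y₁ + y₂) ∈ K ∙ t (y₁ + y₂)) : ∃ c : K, s y₁ = c • t y₁ ∧ s y₂ = c • t y₂ := by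
  obtain ⟨c₁, hc₁⟩ := Submodule.mem_span_singleton.mp hs₁
  obtain ⟨c₂, hc₂⟩ := Submodule.mem_span_singleton.mp hs₂
  obtain ⟨c, hc⟩ := Submodule.mem_span_singleton.mp hs
  have hsum : (c - c₂) • t y₂ = (c₁ - c) • t y₁ := by
    rw [map_add, map_add, ← hc₁, ← hc₂] at hc
    linear_combination (norm := module) hc
  have hcc₂ : c - c₂ = 0 := of_not_not fun hne ↦ hy₂ <| (Submodule.smul_mem_iff _ hne).mp <|
    hsum ▸ Submodule.smul_mem _ _ (Submodule.mem_span_singleton_self _)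
  have hcc₁ : c₁ - c = 0 := by
    rw [hcc₂, zero_smul] at hsum
    exact (smul_eq_zero.mp hsum.symm).resolve_right hy₁
  exact ⟨c, by rw [← hc₁, sub_eq_zero.mp hcc₁], by rw [← hc₂, sub_eq_zero.mp hcc₂]⟩

lemma eq_zero_of_forall_mem_span {r t : E →ₗ[K] W} (hrt : ∀ y, r y ≠ 0 → t y ∈ K ∙ r y)
    {y₁ y₂ : E} (hy₁ : t y₁ ≠ 0) (hy₂ : t y₂ ∉ K ∙ t y₁) (hr₁ : r y₁ = 0) (hr₂ : r y₂ = 0) :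
    r = 0 := by
  refine LinearMap.ext fun z ↦ of_not_not fun hz ↦ hy₂ ?_
  have hmem {y : E} (hy : r y = 0) : t y ∈ K ∙ r z := by
    have hzy : r (z + y) = r z := by rw [map_add, hy, add_zero]
    have htzy := hrt (z + y) (hzy ▸ hz)
    rw [hzy, map_add] at htzy
    exact (Submodule.add_mem_iff_right _ (hrt z hz)).mp htzy
  exact mem_span_singleton_of_finrank_le_one (finrank_span_singleton_le_one (r z)) (hmem hr₁)
    (hmem hr₂) hy₁

lemma exists_smul_eq_of_forall_mem_span
    (hT : ∀ t ∈ T, ∀ s ∈ T, ∀ y, t y ≠ 0 → s y ∈ K ∙ t y) {t : E →ₗ[K] W} (ht : t ∈ T)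
    {y₁ y₂ : E} (hy₁ : t y₁ ≠ 0) (hy₂ : t y₂ ∉ K ∙ t y₁) {s : E →ₗ[K] W} (hs : s ∈ T) :
    ∃ c : K, c • t = s := by
  have hy₂0 : t y₂ ≠ 0 := fun h ↦ hy₂ (h ▸ zero_mem _)
  have hy₁₂ : t (y₁ + y₂) ≠ 0 := fun h ↦ hy₂ <| by
    rw [map_add, add_comm] at h
    exact eq_neg_of_add_eq_zero_left h ▸ neg_mem (Submodule.mem_span_singleton_self _)
  obtain ⟨c, hc₁, hc₂⟩ := exists_eq_smul_and_eq_smul_of_mem_span hy₁ hy₂ (hT t ht s hs _ hy₁)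
    (hT t ht s hs _ hy₂0) (hT t ht s hs _ hy₁₂)
  have hr : s - c • t = 0 := eq_zero_of_forall_mem_span
    (hT _ (T.sub_mem hs (T.smul_mem c ht)) t ht) hy₁ hy₂ (by simp [hc₁]) (by simp [hc₂])
  exact ⟨c, (sub_eq_zero.mp hr).symm⟩

lemma range_le_span_of_forall_mem_span
    (hT : ∀ t ∈ T, ∀ s ∈ T, ∀ y, t y ≠ 0 → s y ∈ K ∙ t y) {t : E →ₗ[K] W} (ht : t ∈ T)
    {x : W} (htx : t.range ≤ K ∙ x) (ht0 : t ≠ 0) {s : E →ₗ[K] W} (hs : s ∈ T) :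
    s.range ≤ K ∙ x := by
  rw [LinearMap.range_le_iff_comap]
  by_contra hsx
  obtain ⟨z, htz, hsz⟩ := exists_notMem_notMem (LinearMap.ker_eq_top.not.mpr ht0) hsx
  exact hsz (Submodule.mem_span_singleton_trans (hT t ht s hs z htz) (htx ⟨z, rfl⟩))

lemma exists_forall_range_le_span_or_finrank_le_one [FiniteDimensional K W]
    (hT : ∀ y, finrank K (valueSpace T y) ≤ 1) :
    (∃ x ≠ 0, ∀ t ∈ T, t.range ≤ K ∙ x) ∨ finrank K T ≤ 1 := by
  have hT' : ∀ t ∈ T, ∀ s ∈ T, ∀ y, t y ≠ 0 → s y ∈ K ∙ t y := fun t ht s hs y hy ↦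
    mem_span_singleton_of_finrank_le_one (hT y) ⟨t, ht, rfl⟩ ⟨s, hs, rfl⟩ hy
  by_cases hrank : ∃ t ∈ T, ∃ y₁ y₂, t y₁ ≠ 0 ∧ t y₂ ∉ K ∙ t y₁
  · obtain ⟨t, ht, y₁, y₂, hy₁, hy₂⟩ := hrank
    have hle : T ≤ K ∙ t := fun s hs ↦ Submodule.mem_span_singleton.mpr
      (exists_smul_eq_of_forall_mem_span hT' ht hy₁ hy₂ hs)
    exact .inr ((Submodule.finrank_mono hle).trans (finrank_span_singleton_le_one t))
  · push Not at hrank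
    by_cases hbot : T = ⊥
    · exact .inr (by rw [hbot, finrank_bot]; exact zero_le_one)
    obtain ⟨t, ht, ht0⟩ := T.exists_mem_ne_zero_of_ne_bot hbot
    obtain ⟨y, hy⟩ := DFunLike.ne_iff.mp ht0
    have hrange : t.range ≤ K ∙ t y := by
      rintro _ ⟨z, rfl⟩
      exact hrank t ht y z hy
    exact .inl ⟨t y, hy, fun s hs ↦ range_le_span_of_forall_mem_span hT' ht hrange ht0 hs⟩

lemma exists_quadraticForm_two_le_finrank_valueSpace [FiniteDimensional K W] {y₀ : E}
    (hy₀ : 2 ≤ finrank K (valueSpace T y₀)) :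
    ∃ Q : QuadraticForm K E, Q ≠ 0 ∧ ∀ y, Q y ≠ 0 → 2 ≤ finrank K (valueSpace T y) := by
  have hne : valueSpace T y₀ ≠ ⊥ := by
    intro h
    rw [h, finrank_bot] at hy₀
    omega
  obtain ⟨_, ⟨t, ht, rfl⟩, ht0⟩ := Submodule.exists_mem_ne_zero_of_ne_bot hne
  have hnle : ¬valueSpace T y₀ ≤ K ∙ t y₀ := fun hle ↦
    hy₀.not_gt ((Submodule.finrank_mono hle).trans_lt
      ((finrank_span_singleton_le_one (t y₀)).trans_lt one_lt_two))
  obtain ⟨_, ⟨t', ht', rfl⟩, ht't⟩ := SetLike.not_le_iff_exists.mp hnle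
  obtain ⟨f, hf⟩ := Module.Projective.exists_dual_ne_zero K ht0
  obtain ⟨g, hg, hgt⟩ := exists_dual_apply_eq_one_le_ker ht't
  refine ⟨.linMulLin (f ∘ₗ t) (g ∘ₗ t') - .linMulLin (f ∘ₗ t') (g ∘ₗ t), ?_, fun y hy ↦
    two_le_finrank_of_det_ne_zero ⟨t, ht, rfl⟩ ⟨t', ht', rfl⟩ hy⟩
  refine DFunLike.ne_iff.mpr ⟨y₀, ?_⟩
  have hgt0 : g (t y₀) = 0 := hgt (Submodule.mem_span_singleton_self _)
  simpa [hgt0, show g (t' y₀) = 1 from hg] using hf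

end RankOne

section Reduction

variable {K U V : Type*} [Field K] [AddCommGroup U] [Module K U] [AddCommGroup V] [Module K V]
  {S : Submodule K (U →ₗ[K] V)} {x x' : U} {y : V}

lemma valueSpace_smul_le (c : K) : valueSpace S (c • x) ≤ valueSpace S x := by
  rintro _ ⟨s, hs, rfl⟩
  rw [map_smul]
  exact Submodule.smul_mem _ _ ⟨s, hs, rfl⟩

lemma applyₗ_surjective (hx : x ≠ 0) :
    Function.Surjective (applyₗ x : (U →ₗ[K] V) →ₗ[K] V) := by
  intro v
  obtain ⟨φ, hφ⟩ := Module.Projective.exists_dual_ne_zero K hx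
  exact ⟨φ.smulRight ((φ x)⁻¹ • v), by simp [hφ]⟩

lemma applyₗ_prod_applyₗ_surjective (hx : x ∉ K ∙ x') (hx' : x' ∉ K ∙ x) :
    Function.Surjective ((applyₗ x).prod (applyₗ x') : (U →ₗ[K] V) →ₗ[K] V × V) := by
  rintro ⟨v, v'⟩
  obtain ⟨φ, hφx, hφ⟩ := exists_dual_apply_eq_one_le_ker hx
  obtain ⟨φ', hφ'x', hφ'⟩ := exists_dual_apply_eq_one_le_ker hx'
  have hφx' : φ x' = 0 := hφ (Submodule.mem_span_singleton_self x')
  have hφ'x : φ' x = 0 := hφ' (Submodule.mem_span_singleton_self x)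
  exact ⟨φ.smulRight v + φ'.smulRight v', by simp [*]⟩

/-- Passing from `S` to `S mod y` lowers the codimension by at least 2 and does not create a vector
`x` with `dim Sx = 2`. -/
def IsReducing (S : Submodule K (U →ₗ[K] V)) (y : V) : Prop :=
  2 ≤ finrank K (valueSpace (traceOrthogonal S) y) ∧
    ∀ x, finrank K (valueSpace S x) = 3 → y ∉ valueSpace S x

variable [FiniteDimensional K U]

lemma mem_valueSpace_traceOrthogonal {φ : Dual K V} (hφ : valueSpace S x ≤ φ.ker)
    (hy : φ y ≠ 0) : x ∈ valueSpace (traceOrthogonal S) y := by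
  have hmem : φ.smulRight x ∈ traceOrthogonal S :=
    smulRight_mem_traceOrthogonal.mpr fun s hs ↦ hφ ⟨s, hs, rfl⟩
  exact ⟨(φ y)⁻¹ • φ.smulRight x, Submodule.smul_mem _ _ hmem, by simp [hy]⟩

variable [FiniteDimensional K V]

lemma finrank_le_finrank_valueSpace_add (hx : x ≠ 0) :
    finrank K V ≤ finrank K (valueSpace S x) + finrank K (traceOrthogonal S) := by
  have hle : _ ≤ finrank K (valueSpace S x) + _ :=
    finrank_add_finrank_le_finrank_map_add (applyₗ_surjective (V := V) hx) S
  have hadd := finrank_add_finrank_traceOrthogonal S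
  omega

lemma isNonspecial_of_finrank_traceOrthogonal_add_three_le
    (hcodim : finrank K (traceOrthogonal S) + 3 ≤ finrank K V) : IsNonspecial S := by
  intro x
  by_cases hx : x = 0
  · exact .inl (valueSpace_eq_bot_iff.mpr fun s _ ↦ by rw [hx, map_zero])
  · have := finrank_le_finrank_valueSpace_add (S := S) hx
    exact .inr (by omega)

lemma finrank_traceOrthogonal_add_finrank_valueSpace_le (hx : x ≠ 0)
    (hrange : ∀ t ∈ traceOrthogonal S, t.range ≤ K ∙ x) :
    finrank K (traceOrthogonal S) + finrank K (valueSpace S x) ≤ finrank K V := by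
  obtain ⟨f, hf⟩ := Module.Projective.exists_dual_ne_zero K hx
  have hle : traceOrthogonal S ≤
      (valueSpace S x).dualAnnihilator.map ((LinearMap.smulRightₗ (M₂ := V) (R := K)).flip x) := by
    intro t ht
    have hteq : ((f x)⁻¹ • f ∘ₗ t).smulRight x = t := by
      ext y
      obtain ⟨c, hc⟩ := Submodule.mem_span_singleton.mp (hrange t ht ⟨y, rfl⟩)
      simp [← hc, mul_comm c, hf]
    refine ⟨(f x)⁻¹ • f ∘ₗ t, (Submodule.mem_dualAnnihilator _).mpr ?_, hteq⟩
    rintro _ ⟨s, hs, rfl⟩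
    exact smulRight_mem_traceOrthogonal.mp (hteq.symm ▸ ht) s hs
  rw [← Subspace.finrank_add_finrank_dualAnnihilator_eq (valueSpace S x), add_comm]
  exact Nat.add_le_add_left ((Submodule.finrank_mono hle).trans (Submodule.finrank_map_le _ _)) _

lemma eq_ker_applyₗ (hx : x ≠ 0) (hSx : valueSpace S x = ⊥)
    (hcodim : finrank K (traceOrthogonal S) ≤ finrank K V) : S = (applyₗ x).ker := by
  have hadd := finrank_add_finrank_traceOrthogonal S
  refine eq_comap_of_finrank_add_le (applyₗ_surjective hx) hSx.le ?_
  rw [finrank_bot]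
  omega

lemma eq_comap_valueSpace_prod_valueSpace (hx : x ∉ K ∙ x') (hx' : x' ∉ K ∙ x)
    (hcodim : finrank K (traceOrthogonal S) + finrank K (valueSpace S x) +
      finrank K (valueSpace S x') ≤ 2 * finrank K V) :
    S = ((valueSpace S x).prod (valueSpace S x')).comap ((applyₗ x).prod (applyₗ x')) := by
  have hadd := finrank_add_finrank_traceOrthogonal S
  refine eq_comap_of_finrank_add_le (applyₗ_prod_applyₗ_surjective hx hx') ?_ ?_
  · rintro _ ⟨s, hs, rfl⟩
    exact ⟨⟨s, hs, rfl⟩, ⟨s, hs, rfl⟩⟩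
  · have hprod := finrank_prod_submodule_le (valueSpace S x) (valueSpace S x')
    rw [finrank_prod]
    omega

lemma le_or_le_of_finrank_valueSpace_eq (hx : x ∉ K ∙ x') (hx' : x' ∉ K ∙ x) {n : ℕ}
    (hcodim : finrank K (traceOrthogonal S) + 2 * n ≤ 2 * finrank K V) (hn : n < finrank K V)
    (hSx : finrank K (valueSpace S x) = n) (hSx' : finrank K (valueSpace S x') = n)
    {z : U} (hSz : finrank K (valueSpace S z) = n) :
    valueSpace S z ≤ valueSpace S x ∨ valueSpace S z ≤ valueSpace S x' := by
  have hS := eq_comap_valueSpace_prod_valueSpace (S := S) hx hx' (by omega)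
  have hmem {s : U →ₗ[K] V} (hsx : s x ∈ valueSpace S x) (hsx' : s x' ∈ valueSpace S x') :
      s ∈ S :=
    hS.ge ⟨hsx, hsx'⟩
  have hz : z ∈ Submodule.span K {x, x'} := by
    by_contra hz
    obtain ⟨φ, hφz, hφ⟩ := exists_dual_apply_eq_one_le_ker hz
    have hφx : φ x = 0 := hφ (Submodule.subset_span (by simp))
    have hφx' : φ x' = 0 := hφ (Submodule.subset_span (by simp))
    have htop : valueSpace S z = ⊤ := eq_top_iff.mpr fun v _ ↦
      ⟨φ.smulRight v, hmem (by simp [hφx]) (by simp [hφx']), by simp [hφz]⟩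
    rw [htop, finrank_top] at hSz
    omega
  obtain ⟨a, b, rfl⟩ := Submodule.mem_span_pair.mp hz
  by_cases ha : a = 0
  · right
    simpa only [ha, zero_smul, zero_add] using valueSpace_smul_le b
  · left
    refine (Submodule.eq_of_le_of_finrank_eq (fun v hv ↦ ?_) (hSx.trans hSz.symm)).ge
    obtain ⟨s, hs⟩ := applyₗ_prod_applyₗ_surjective hx hx' (a⁻¹ • v, (0 : V))
    obtain ⟨hsx, hsx'⟩ := Prod.ext_iff.mp hs
    change s x = a⁻¹ • v at hsx
    change s x' = 0 at hsx'
    exact ⟨s, hmem (hsx ▸ Submodule.smul_mem _ _ hv) (hsx' ▸ zero_mem _), by simp [hsx, hsx', ha]⟩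

lemma exists_isReducing_of_pair (hV : 4 ≤ finrank K V)
    (hcodim : finrank K (traceOrthogonal S) + 6 ≤ 2 * finrank K V)
    (hx0 : x ≠ 0) (hx' : x' ∉ K ∙ x) (hSx : finrank K (valueSpace S x) = 3)
    (hSx' : finrank K (valueSpace S x') = 3) :
    ∃ Q : QuadraticForm K V, Q ≠ 0 ∧ ∀ y, Q y ≠ 0 → IsReducing S y := by
  have hx : x ∉ K ∙ x' := fun h ↦ hx' <| mem_span_singleton_of_finrank_le_one
    (finrank_span_singleton_le_one x') h (Submodule.mem_span_singleton_self x') hx0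
  obtain ⟨φ, hφ0, hφ⟩ := (valueSpace S x).exists_le_ker_of_lt_top
    (Submodule.lt_top_of_finrank_lt_finrank (by omega))
  obtain ⟨φ', hφ'0, hφ'⟩ := (valueSpace S x').exists_le_ker_of_lt_top
    (Submodule.lt_top_of_finrank_lt_finrank (by omega))
  refine ⟨.linMulLin φ φ', linMulLin_ne_zero hφ0 hφ'0, fun y hy ↦ ?_⟩
  have hφy : φ y ≠ 0 := left_ne_zero_of_mul hy
  have hφ'y : φ' y ≠ 0 := right_ne_zero_of_mul hy
  refine ⟨two_le_finrank_of_notMem_span (mem_valueSpace_traceOrthogonal hφ hφy)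
    (mem_valueSpace_traceOrthogonal hφ' hφ'y) hx0 hx', fun z hSz hyz ↦ ?_⟩
  rcases le_or_le_of_finrank_valueSpace_eq hx hx' hcodim (by omega) hSx hSx' hSz with hz | hz
  · exact hφy (hφ (hz hyz))
  · exact hφ'y (hφ' (hz hyz))

lemma exists_isReducing_of_forall_mem_span (hV : 4 ≤ finrank K V)
    (hcodim : finrank K V ≤ finrank K (traceOrthogonal S) + 2) (hx0 : x ≠ 0)
    (hSx : finrank K (valueSpace S x) = 3)
    (hx : ∀ z, finrank K (valueSpace S z) = 3 → z ∈ K ∙ x) :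
    ∃ Q : QuadraticForm K V, Q ≠ 0 ∧ ∀ y, Q y ≠ 0 → IsReducing S y := by
  have hrange : ¬∀ t ∈ traceOrthogonal S, t.range ≤ K ∙ x := fun hrange ↦ by
    have := finrank_traceOrthogonal_add_finrank_valueSpace_le hx0 hrange
    omega
  push Not at hrange
  obtain ⟨t, ht, htx⟩ := hrange
  obtain ⟨_, ⟨y₁, rfl⟩, hy₁⟩ := SetLike.not_le_iff_exists.mp htx
  obtain ⟨f, hfy₁, hfx⟩ := exists_dual_apply_eq_one_le_ker hy₁
  obtain ⟨φ, hφ0, hφ⟩ := (valueSpace S x).exists_le_ker_of_lt_top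
    (Submodule.lt_top_of_finrank_lt_finrank (by omega))
  have hft0 : f ∘ₗ t ≠ 0 := fun h ↦ one_ne_zero (hfy₁.symm.trans (DFunLike.congr_fun h y₁))
  refine ⟨.linMulLin φ (f ∘ₗ t), linMulLin_ne_zero hφ0 hft0, fun y hy ↦ ?_⟩
  have hφy : φ y ≠ 0 := left_ne_zero_of_mul hy
  have hfty : f (t y) ≠ 0 := right_ne_zero_of_mul hy
  refine ⟨two_le_finrank_of_notMem_span (mem_valueSpace_traceOrthogonal hφ hφy) ⟨t, ht, rfl⟩ hx0
    fun hty ↦ hfty (hfx hty), fun z hSz hyz ↦ hφy (hφ ?_)⟩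
  obtain ⟨c, rfl⟩ := Submodule.mem_span_singleton.mp (hx z hSz)
  exact valueSpace_smul_le c hyz

lemma eq_ker_applyₗ_or_exists_isReducing_of_forall_finrank_ne_three (hS : IsNonspecial S)
    (hcodim₂ : 2 ≤ finrank K (traceOrthogonal S))
    (hcodim : finrank K V ≤ finrank K (traceOrthogonal S) + 2)
    (hS₃ : ∀ x, finrank K (valueSpace S x) ≠ 3) :
    (∃ x, S = (applyₗ x).ker) ∨
      ∃ Q : QuadraticForm K V, Q ≠ 0 ∧ ∀ y, Q y ≠ 0 → IsReducing S y := by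
  by_cases hT : ∃ y, 2 ≤ finrank K (valueSpace (traceOrthogonal S) y)
  · obtain ⟨y, hy⟩ := hT
    obtain ⟨Q, hQ, hQT⟩ := exists_quadraticForm_two_le_finrank_valueSpace hy
    exact .inr ⟨Q, hQ, fun y hy ↦ ⟨hQT y hy, fun x hx ↦ absurd hx (hS₃ x)⟩⟩
  · push Not at hT
    obtain ⟨x, hx, hrange⟩ := (exists_forall_range_le_span_or_finrank_le_one
      fun y ↦ Nat.lt_succ_iff.mp (hT y)).resolve_right (by omega)
    have hle := finrank_traceOrthogonal_add_finrank_valueSpace_le hx hrange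
    exact .inl ⟨x, eq_ker_applyₗ hx (hS.eq_bot_of_finrank_le (by omega)) (by omega)⟩

lemma eq_ker_applyₗ_or_exists_isReducing (hS : IsNonspecial S)
    (hle : finrank K V ≤ finrank K (traceOrthogonal S) + 2)
    (hcodim : finrank K (traceOrthogonal S) + 6 ≤ 2 * finrank K V) :
    (∃ x, S = (applyₗ x).ker) ∨
      ∃ Q : QuadraticForm K V, Q ≠ 0 ∧ ∀ y, Q y ≠ 0 → IsReducing S y := by
  by_cases hS₃ : ∃ x, finrank K (valueSpace S x) = 3
  · right
    obtain ⟨x, hSx⟩ := hS₃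
    have hx0 : x ≠ 0 := by
      rintro rfl
      have hbot : valueSpace S 0 = ⊥ := valueSpace_eq_bot_iff.mpr fun s _ ↦ s.map_zero
      rw [hbot, finrank_bot] at hSx
      omega
    by_cases hx : ∀ z, finrank K (valueSpace S z) = 3 → z ∈ K ∙ x
    · exact exists_isReducing_of_forall_mem_span (by omega) hle hx0 hSx hx
    · push Not at hx
      obtain ⟨x', hSx', hx'⟩ := hx
      exact exists_isReducing_of_pair (by omega) hcodim hx0 hx' hSx hSx'
  · push Not at hS₃
    exact eq_ker_applyₗ_or_exists_isReducing_of_forall_finrank_ne_three hS (by omega) hle hS₃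

end Reduction

section CardEqTwo

variable {K U V : Type*} [Field K] [AddCommGroup U] [Module K U] [AddCommGroup V] [Module K V]

lemma eq_zero_or_eq_one_of_card_eq_two (hK : Nat.card K = 2) (c : K) : c = 0 ∨ c = 1 := by
  obtain ⟨u, -, hu⟩ := (Nat.card_eq_two_iff' (0 : K)).mp hK
  exact or_iff_not_imp_left.mpr fun hc ↦ (hu c hc).trans (hu 1 one_ne_zero).symm

lemma exists_linearMap_coe_eq_of_card_eq_two (hK : Nat.card K = 2) (F : U →+ V) :
    ∃ G : U →ₗ[K] V, ⇑G = F :=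
  ⟨{ F with
      map_smul' := fun c u ↦ by
        rcases eq_zero_or_eq_one_of_card_eq_two hK c with rfl | rfl <;> simp }, rfl⟩

lemma mem_span_singleton_iff_of_card_eq_two (hK : Nat.card K = 2) {v w : V} :
    v ∈ K ∙ w ↔ v = 0 ∨ v = w := by
  constructor
  · intro hv
    obtain ⟨c, rfl⟩ := Submodule.mem_span_singleton.mp hv
    rcases eq_zero_or_eq_one_of_card_eq_two hK c with rfl | rfl <;> simp
  · rintro (rfl | rfl)
    exacts [zero_mem _, Submodule.mem_span_singleton_self v]

lemma notMem_span_singleton_of_card_eq_two (hK : Nat.card K = 2) {v w : V} (hv : v ≠ 0)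
    (hvw : v ≠ w) : v ∉ K ∙ w := by
  rw [mem_span_singleton_iff_of_card_eq_two hK]
  tauto

variable [FiniteDimensional K V]

lemma exists_forall_apply_smulRight_eq_smul (hK : Nat.card K = 2) (hV : 3 ≤ finrank K V)
    {S : Submodule K (U →ₗ[K] V)} {F : S →ₗ[K] V} {d : V} (hd : d ≠ 0)
    (hF : IsQuasiRangeCompatible F d) {φ : Dual K U} (hφ : ∀ y, φ.smulRight y ∈ S) :
    ∃ c : K, ∀ y, F ⟨φ.smulRight y, hφ y⟩ = c • y := by
  let g : V →ₗ[K] V := F ∘ₗ (LinearMap.smulRightₗ φ).codRestrict S hφ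
  refine exists_forall_eq_smul_of_forall_ne_mem_span hK hV (g := g) (d := d) fun y hy ↦ ?_
  have hrange : (φ.smulRight y).range ≤ K ∙ y := by
    rintro _ ⟨x, rfl⟩
    exact Submodule.smul_mem _ _ (Submodule.mem_span_singleton_self y)
  exact hrange (hF ⟨φ.smulRight y, hφ y⟩ fun hdy ↦
    notMem_span_singleton_of_card_eq_two hK hd hy.symm (hrange hdy))

lemma forcesLocality_of_forall_modSpan (hK : Nat.card K = 2) (hV : 4 ≤ finrank K V)
    {S : Submodule K (U →ₗ[K] V)} (hS : IsNonspecial S) {Q : QuadraticForm K V} (hQ : Q ≠ 0)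
    (hSQ : ∀ y, Q y ≠ 0 → ForcesLocality (modSpan S y)) : ForcesLocality S := by
  intro F d hd hF
  obtain ⟨y₁, y₂, hne, hd₁, hd₂, hQ₁, hQ₂⟩ := exists_pair_ne_zero_of_card_eq_two hK hQ hV d
  have hy₂ : y₂ ≠ 0 := by
    rintro rfl
    exact hQ₂ Q.map_zero
  have hdisj : Disjoint (K ∙ y₁) (K ∙ y₂) := Submodule.disjoint_span_singleton_of_notMem
    (notMem_span_singleton_of_card_eq_two hK hy₂ hne.symm)
  exact isLocal_of_forcesLocality_modSpan hS hdisj (hSQ y₁ hQ₁) (hSQ y₂ hQ₂) hF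
    (notMem_span_singleton_of_card_eq_two hK hd hd₁.symm)
    (notMem_span_singleton_of_card_eq_two hK hd hd₂.symm)

variable [FiniteDimensional K U]

lemma exists_forall_apply_smulRight_eq (hK : Nat.card K = 2) (hV : 3 ≤ finrank K V)
    {S : Submodule K (U →ₗ[K] V)} {F : S →ₗ[K] V} {d : V} (hd : d ≠ 0)
    (hF : IsQuasiRangeCompatible F d) :
    ∃ x : U, ∀ (φ : Dual K U) (hφ : ∀ y, φ.smulRight y ∈ S) (y : V),
      F ⟨φ.smulRight y, hφ y⟩ = φ x • y := by
  obtain ⟨G, rfl⟩ := F.exists_extend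
  obtain ⟨f, hfd⟩ := Module.Projective.exists_dual_ne_zero K hd
  obtain ⟨x, hx⟩ := (evalEquiv K U).surjective
    ((f d)⁻¹ • f ∘ₗ G ∘ₗ (LinearMap.smulRightₗ (M₂ := U) (R := K) (M := V)).flip d)
  refine ⟨x, fun φ hφ y ↦ ?_⟩
  obtain ⟨c, hc⟩ := exists_forall_apply_smulRight_eq_smul hK hV hd hF hφ
  have hcx : φ x = c :=
    calc φ x = (f d)⁻¹ * f (G (φ.smulRight d)) := DFunLike.congr_fun hx φ
      _ = (f d)⁻¹ * f (c • d) := congrArg (fun v ↦ (f d)⁻¹ * f v) (hc d)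
      _ = c := by rw [map_smul, smul_eq_mul, mul_comm c, inv_mul_cancel_left₀ hfd]
  rw [hc, hcx]

lemma forcesLocality_of_forall_comp_mem (hK : Nat.card K = 2) (hV : 3 ≤ finrank K V)
    {S : Submodule K (U →ₗ[K] V)} (hS : ∀ (g : V →ₗ[K] V), ∀ s ∈ S, g ∘ₗ s ∈ S) :
    ForcesLocality S := by
  intro F d hd hF
  obtain ⟨x, hx⟩ := exists_forall_apply_smulRight_eq hK hV hd hF
  refine ⟨x, fun s ↦ ?_⟩
  let b := finBasis K V
  have hmem (i) (y : V) : (b.coord i ∘ₗ (s : U →ₗ[K] V)).smulRight y ∈ S :=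
    hS ((b.coord i).smulRight y) s s.2
  have hsum : s = ∑ i, ⟨(b.coord i ∘ₗ (s : U →ₗ[K] V)).smulRight (b i), hmem i (b i)⟩ := by
    ext u
    simp [b.sum_repr]
  calc F s = ∑ i, b.coord i ((s : U →ₗ[K] V) x) • b i := by
        conv_lhs => rw [hsum, map_sum]
        exact Finset.sum_congr rfl fun i _ ↦ hx _ (hmem i) (b i)
    _ = (s : U →ₗ[K] V) x := b.sum_repr _

lemma forcesLocality_ker_applyₗ (hK : Nat.card K = 2) (hV : 3 ≤ finrank K V) (x : U) :
    ForcesLocality (applyₗ x : (U →ₗ[K] V) →ₗ[K] V).ker :=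
  forcesLocality_of_forall_comp_mem hK hV fun g s hs ↦ by
    rw [LinearMap.mem_ker] at hs ⊢
    simpa using congrArg g hs

lemma forcesLocality_of_finrank_traceOrthogonal_add_three_le (hK : Nat.card K = 2)
    (S : Submodule K (U →ₗ[K] V))
    (hcodim : finrank K (traceOrthogonal S) + 3 ≤ finrank K V) : ForcesLocality S := by
  induction hn : finrank K V using Nat.strong_induction_on generalizing V with
  | _ n ih =>
    subst hn
    by_cases hT : traceOrthogonal S = ⊥
    · have hadd := finrank_add_finrank_traceOrthogonal S
      rw [hT, finrank_bot, add_zero] at hadd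
      rw [Submodule.eq_top_of_finrank_eq hadd]
      exact forcesLocality_of_forall_comp_mem hK (by omega) fun _ _ _ ↦ Submodule.mem_top
    obtain ⟨t, ht, ht0⟩ := Submodule.exists_mem_ne_zero_of_ne_bot hT
    obtain ⟨y₀, hy₀⟩ := DFunLike.ne_iff.mp ht0
    obtain ⟨f, hf⟩ := Module.Projective.exists_dual_ne_zero K hy₀
    have hft : f ∘ₗ t ≠ 0 := fun h ↦ hf (DFunLike.congr_fun h y₀)
    have hV : 4 ≤ finrank K V := by
      have := Submodule.one_le_finrank_iff.mpr hT
      omega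
    have hS : IsNonspecial S := isNonspecial_of_finrank_traceOrthogonal_add_three_le hcodim
    refine forcesLocality_of_forall_modSpan hK hV hS (linMulLin_ne_zero hft hft) fun y hy ↦ ?_
    have hty : t y ≠ 0 := fun h ↦ hy (by simp [h])
    have hy0 : y ≠ 0 := fun h ↦ hty (by rw [h, map_zero])
    have hTy : 1 ≤ finrank K (valueSpace (traceOrthogonal S) y) :=
      Submodule.one_le_finrank_iff.mpr fun h ↦ hty (valueSpace_eq_bot_iff.mp h t ht)
    have hle := finrank_traceOrthogonal_modSpan_add_le S y
    have hquot := finrank_quotient_span_singleton_add_one (K := K) hy0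
    exact ih _ (by omega) _ (by omega) rfl

theorem IsNonspecial.forcesLocality (hK : Nat.card K = 2) {S : Submodule K (U →ₗ[K] V)}
    (hS : IsNonspecial S)
    (hcodim : finrank K (traceOrthogonal S) + 6 ≤ 2 * finrank K V) : ForcesLocality S := by
  induction hn : finrank K V using Nat.strong_induction_on generalizing V with
  | _ n ih =>
    subst hn
    by_cases hsmall : finrank K (traceOrthogonal S) + 3 ≤ finrank K V
    · exact forcesLocality_of_finrank_traceOrthogonal_add_three_le hK S hsmall
    rcases eq_ker_applyₗ_or_exists_isReducing hS (by omega) hcodim with ⟨x, rfl⟩ | ⟨Q, hQ, hQS⟩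
    · exact forcesLocality_ker_applyₗ hK (by omega) x
    refine forcesLocality_of_forall_modSpan hK (by omega) hS hQ fun y hy ↦ ?_
    have hy0 : y ≠ 0 := by
      rintro rfl
      exact hy Q.map_zero
    obtain ⟨hTy, hSy⟩ := hQS y hy
    have hle := finrank_traceOrthogonal_modSpan_add_le S y
    have hquot := finrank_quotient_span_singleton_add_one (K := K) hy0
    exact ih _ (by omega) (hS.modSpan hSy) (by omega) rfl

end CardEqTwo

end OperatorSpace

/-- Let `K` be the field with exactly 2 elements and `S` a linear
subspace of `L(U,V)` with `codim S ≤ 2 dim V − 6`. Then either `S` has special type 1 or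
special type 2 (there is `x ∈ U` with `dim Sx = 1` or `dim Sx = 2`), or every
quasi-range-compatible additive homomorphism `F : S → V` is local. -/
theorem quasi_range_compatible_hom_local_or_special_type_one_or_two
    (K U V : Type*) [Field K] (hK : Nat.card K = 2)
    [AddCommGroup U] [Module K U] [FiniteDimensional K U]
    [AddCommGroup V] [Module K V] [FiniteDimensional K V]
    (S : Submodule K (U →ₗ[K] V))
    (h1 : Module.finrank K (U →ₗ[K] V) + 6 ≤
      Module.finrank K S + 2 * Module.finrank K V) :
    (∃ x : U, Module.finrank K (Submodule.map (LinearMap.applyₗ x) S) = 1 ∨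
      Module.finrank K (Submodule.map (LinearMap.applyₗ x) S) = 2) ∨
    (∀ F : ↥S →+ V,
      (∃ D : Submodule K V, Module.finrank K D = 1 ∧
        ∀ s : ↥S, ¬ D ≤ LinearMap.range (s : U →ₗ[K] V) →
          F s ∈ LinearMap.range (s : U →ₗ[K] V)) →
      ∃ x : U, ∀ s : ↥S, F s = (s : U →ₗ[K] V) x) := by
  refine or_iff_not_imp_left.mpr fun hspecial F hF ↦ ?_
  obtain ⟨D, hD, hFD⟩ := hF
  have hS : OperatorSpace.IsNonspecial S :=
    OperatorSpace.isNonspecial_of_forall_finrank_ne fun x ↦ not_or.mp fun hx ↦ hspecial ⟨x, hx⟩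
  have hadd := OperatorSpace.finrank_add_finrank_traceOrthogonal S
  obtain ⟨G, hG⟩ := OperatorSpace.exists_linearMap_coe_eq_of_card_eq_two hK F
  obtain ⟨⟨d, rfl⟩⟩ := D.finrank_le_one_iff_isPrincipal.mp hD.le
  have hd : d ≠ 0 := by
    rintro rfl
    rw [Submodule.span_zero_singleton, finrank_bot] at hD
    exact zero_ne_one hD
  have hGd : OperatorSpace.IsQuasiRangeCompatible G d := fun s hds ↦
    hG ▸ hFD s fun hle ↦ hds (hle (Submodule.mem_span_singleton_self d))
  rw [← hG]
  exact hS.forcesLocality hK (by omega) G d hd hGd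
end

section
/- Let U and V be finite-dimensional vector spaces over a field K and 𝒮 an affine subspace of L(U,V) with codim 𝒮 ≤ dim V − 2, and codim 𝒮 ≤ dim V − 3 if K has exactly 2 elements. Then every quasi-range-compatible affine map F : 𝒮 → V is local. -/
attribute [local instance] AffineSubspace.toAddTorsor

/-!
Let `S` be the direction of `𝒮` and `D = K δ`. Functionals `y₁, …, yₖ` on `V` are jointly onto if
`s ↦ (yᵢ ∘ s)ᵢ` maps `S` onto `(U*)ᵏ`. A jointly onto `k`-tuple extends by every `z` outside some
subspace of `V*` of dimension at most `k + codim 𝒮`.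

If `y δ = 1` and `y` alone is onto, then `y ∘ F` vanishes wherever `y ∘ s` does, so `y ∘ F` factors
through `s ↦ y ∘ s`, that is, `y (F s) = y (s u)` for a unique `u`. If `y₁, …, yₖ` are jointly onto,
the point attached to an affine combination `∑ cᵢ yᵢ` with all `cᵢ ≠ 0` must coincide with the
points attached to every `yᵢ`. Hence two jointly onto functionals share their point: take
`α y + (1 - α) x` if `K` has an element `α ≠ 0, 1`, and `z + y - x` with a third functional `z`
otherwise, which costs one more dimension. So for a fixed onto `x`, its point `u` works for all `y`
outside a small subspace of `V*` with `y δ = 1`, and such `y` span `V*`.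
-/

open Module Submodule

theorem exists_ne_zero_ne_one_of_card_ne_two {K : Type*} [MulZeroOneClass K] [Nontrivial K]
    (hK : Nat.card K ≠ 2) : ∃ α : K, α ≠ 0 ∧ α ≠ 1 := by
  contrapose! hK
  exact (Nat.card_eq_two_iff' 0).2 ⟨1, one_ne_zero, hK⟩

section AffineHyperplane

variable {K W : Type*} [Field K] [AddCommGroup W] [Module K W] {f : Dual K W}
  {P Y : Submodule K W}

theorem eq_top_of_forall_apply_eq_one_mem (hf : f ≠ 0) (hP : ∀ w, f w = 1 → w ∈ P) : P = ⊤ := by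
  obtain ⟨e, he⟩ := LinearMap.surjective hf 1
  refine (eq_top_iff' (p := P)).2 fun w => ?_
  have hshift : w + (1 - f w) • e ∈ P := hP _ (by simp [he])
  exact (P.add_mem_iff_left (P.smul_mem _ (hP e he))).1 hshift

theorem exists_apply_eq_one_notMem (hf : f ≠ 0) (hY : Y ≠ ⊤) : ∃ w, f w = 1 ∧ w ∉ Y := by
  contrapose! hY
  exact eq_top_of_forall_apply_eq_one_mem hf hY

theorem eq_top_of_forall_apply_eq_one_notMem_mem_of_ne_one {α : K} (hα₀ : α ≠ 0) (hα₁ : α ≠ 1)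
    (hf : f ≠ 0) (hY : Y ≠ ⊤) (hP : ∀ w, f w = 1 → w ∉ Y → w ∈ P) : P = ⊤ := by
  refine eq_top_of_forall_apply_eq_one_mem hf fun w hw => ?_
  by_cases hwY : w ∈ Y
  · obtain ⟨a, ha, haY⟩ := exists_apply_eq_one_notMem hf hY
    have hcombY : α • w + (1 - α) • a ∉ Y := by
      rwa [Y.add_mem_iff_right (Y.smul_mem α hwY), Y.smul_mem_iff (sub_ne_zero.2 hα₁.symm)]
    have hcombP : α • w + (1 - α) • a ∈ P := hP _ (by simp [hw, ha]) hcombY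
    rwa [P.add_mem_iff_left (P.smul_mem _ (hP a ha haY)), P.smul_mem_iff hα₀] at hcombP
  · exact hP w hw hwY

theorem eq_top_of_forall_apply_eq_one_notMem_mem_of_finrank_add_two_le (hf : f ≠ 0)
    (hY : finrank K Y + 2 ≤ finrank K W) (hP : ∀ w, f w = 1 → w ∉ Y → w ∈ P) : P = ⊤ := by
  have : FiniteDimensional K W := .of_finrank_pos (by lia)
  refine eq_top_of_forall_apply_eq_one_mem hf fun w hw => ?_
  by_cases hwY : w ∈ Y
  · obtain ⟨a, ha, haY⟩ := exists_apply_eq_one_notMem hf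
      (lt_top_of_finrank_lt_finrank (s := Y) (by lia)).ne
    have hsup : finrank K (Y ⊔ K ∙ a : Submodule K W) < finrank K W := by
      rw [finrank_sup_span_singleton haY]
      lia
    obtain ⟨b, hb, hbY⟩ := exists_apply_eq_one_notMem hf (lt_top_of_finrank_lt_finrank hsup).ne
    have hwaP : w - a + b ∈ P := by
      refine hP _ (by simp [hw, ha, hb]) fun h => hbY ?_
      have hwa : w - a ∈ Y ⊔ K ∙ a :=
        sub_mem (mem_sup_left hwY) (mem_sup_right (mem_span_singleton_self a))
      exact (add_mem_cancel_left hwa).1 (mem_sup_left h)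
    have hbP : b ∈ P := hP b hb fun h => hbY (mem_sup_left h)
    exact (P.sub_mem_iff_left (hP a ha haY)).1 ((P.add_mem_iff_left hbP).1 hwaP)
  · exact hP w hw hwY

theorem eq_top_of_forall_apply_eq_one_notMem_mem (hf : f ≠ 0) (hY : Y ≠ ⊤)
    (hcard : Nat.card K = 2 → finrank K Y + 2 ≤ finrank K W)
    (hP : ∀ w, f w = 1 → w ∉ Y → w ∈ P) : P = ⊤ := by
  by_cases hK : Nat.card K = 2
  · exact eq_top_of_forall_apply_eq_one_notMem_mem_of_finrank_add_two_le hf (hcard hK) hP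
  · obtain ⟨α, hα₀, hα₁⟩ := exists_ne_zero_ne_one_of_card_ne_two hK
    exact eq_top_of_forall_apply_eq_one_notMem_mem_of_ne_one hα₀ hα₁ hf hY hP

end AffineHyperplane

section JointlyOnto

variable {K U V ι : Type*} [Field K] [AddCommGroup U] [Module K U] [AddCommGroup V] [Module K V]
  {S : Submodule K (U →ₗ[K] V)}

/-- The linear maps `U → V` whose range lies in `W`. -/
abbrev mapsInto (U : Type*) [AddCommGroup U] [Module K U] (W : Submodule K V) :
    Submodule K (U →ₗ[K] V) :=
  compatibleMaps ⊤ W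

theorem mem_mapsInto {W : Submodule K V} {s : U →ₗ[K] V} : s ∈ mapsInto U W ↔ ∀ b, s b ∈ W :=
  ⟨fun h _ => h trivial, fun h b _ => h b⟩

theorem mapsInto_mono {W₁ W₂ : Submodule K V} (h : W₁ ≤ W₂) : mapsInto U W₁ ≤ mapsInto U W₂ :=
  fun _ hs _ hb => h (hs hb)

theorem finrank_le_finrank_inf_ker_add_one [FiniteDimensional K V] (W : Submodule K V)
    (y : Dual K V) : finrank K W ≤ finrank K (W ⊓ y.ker : Submodule K V) + 1 := by
  have hsup := finrank_sup_add_finrank_inf_eq W y.ker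
  have hle := (W ⊔ y.ker).finrank_le
  have hker := y.finrank_range_add_finrank_ker
  have hrange := y.range.finrank_le
  rw [finrank_self] at hrange
  lia

theorem map_compRight_eq_top [FiniteDimensional K U] {y : Dual K V}
    (h : ∀ b : U, (∀ s ∈ S, y (s b) = 0) → b = 0) : S.map (LinearMap.compRight K y) = ⊤ := by
  have hbot : (S.map (LinearMap.compRight K y)).dualCoannihilator = ⊥ := (Submodule.eq_bot_iff _).2
    fun b hb => h b fun s hs => (mem_dualCoannihilator _).1 hb _ (mem_map_of_mem hs)
  rw [← Subspace.dualCoannihilator_dualAnnihilator_eq (W := S.map _), hbot, dualAnnihilator_bot]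

theorem sup_mapsInto_inf_ker_lt {W₀ W : Submodule K V} (hW : W ≤ W₀) {y : Dual K V}
    (hy : y ∉ W.dualAnnihilator) {b : U} (hb : b ≠ 0)
    (hS : ∀ s ∈ S ⊓ mapsInto U W₀, y (s b) = 0) :
    S ⊔ mapsInto U (W ⊓ y.ker) < S ⊔ mapsInto U W := by
  obtain ⟨w, hwW, hyw⟩ : ∃ w ∈ W, y w ≠ 0 := by simpa [mem_dualAnnihilator] using hy
  obtain ⟨φ, hφ⟩ := Projective.exists_dual_ne_zero K hb
  have hrank_one : φ.smulRight w ∈ mapsInto U W := mem_mapsInto.2 fun c => W.smul_mem _ hwW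
  refine SetLike.lt_iff_le_and_exists.2 ⟨sup_le_sup_left (mapsInto_mono inf_le_left) _,
    φ.smulRight w, mem_sup_right hrank_one, fun hmem => ?_⟩
  obtain ⟨s, hs, m, hm, hsm⟩ := mem_sup.1 hmem
  have hsW : s ∈ mapsInto U W := by
    rw [eq_sub_of_add_eq hsm]
    exact sub_mem hrank_one (mapsInto_mono inf_le_left hm)
  have hyb : y ((s + m) b) = 0 := by
    rw [LinearMap.add_apply, map_add, hS s ⟨hs, mapsInto_mono hW hsW⟩,
      LinearMap.mem_ker.1 (mem_mapsInto.1 hm b).2, add_zero]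
  simp [hsm, hφ, hyw] at hyb

-- Cutting `W` by the kernel of a functional that fails to be onto lowers `dim W` by one and
-- `dim (S ⊔ mapsInto U W)` by at least one, so a `W` minimal for the inequality in the proof admits
-- no such functional.
theorem exists_le_forall_map_compRight_eq_top [FiniteDimensional K U] [FiniteDimensional K V]
    (S : Submodule K (U →ₗ[K] V)) (W₀ : Submodule K V) :
    ∃ W ≤ W₀, finrank K W₀ + finrank K S ≤ finrank K W + finrank K (U →ₗ[K] V) ∧
      ∀ y ∉ W.dualAnnihilator, (S ⊓ mapsInto U W₀).map (LinearMap.compRight K y) = ⊤ := by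
  obtain ⟨W, hW, hmin⟩ := exists_minimal_le_of_wellFoundedLT
    (fun W => finrank K W₀ + finrank K (S ⊔ mapsInto U W : Submodule K (U →ₗ[K] V)) ≤
      finrank K W + finrank K (U →ₗ[K] V)) W₀ (by simpa using Submodule.finrank_le _)
  refine ⟨W, hW, ?_, fun y hy => map_compRight_eq_top fun b hb => ?_⟩
  · have hmono := finrank_mono (le_sup_left : S ≤ S ⊔ mapsInto U W)
    have := hmin.prop
    lia
  · by_contra hb₀
    have hdrop := finrank_lt_finrank_of_lt (sup_mapsInto_inf_ker_lt hW hy hb₀ hb)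
    have hcut := finrank_le_finrank_inf_ker_add_one W y
    have hW_le : W ≤ W ⊓ y.ker := hmin.le_of_le (by have := hmin.prop; lia) inf_le_left
    exact hy ((mem_dualAnnihilator _).2 fun w hw => (hW_le hw).2)

/-- The functionals `yᵢ` are jointly onto on `S` if `s ↦ (yᵢ ∘ s)ᵢ` maps `S` onto `ι → U*`: their
values along `S` can be prescribed independently. -/
def IsJointlyOnto (S : Submodule K (U →ₗ[K] V)) (y : ι → Dual K V) : Prop :=
  ∀ φ : ι → Dual K U, ∃ s ∈ S, ∀ i, y i ∘ₗ s = φ i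

theorem IsJointlyOnto.sum_smul [Fintype ι] {y : ι → Dual K V} (hy : IsJointlyOnto S y) {c : ι → K}
    (hc : c ≠ 0) : IsJointlyOnto S ![∑ i, c i • y i] := by
  classical
  intro φ
  obtain ⟨i, hi⟩ := Function.ne_iff.1 hc
  obtain ⟨s, hs, hys⟩ := hy (Pi.single i ((c i)⁻¹ • φ 0))
  refine ⟨s, hs, Fin.forall_fin_one.2 ?_⟩
  calc (∑ j, c j • y j) ∘ₗ s
    _ = ∑ j, c j • (y j ∘ₗ s) := by ext; simp
    _ = c i • (c i)⁻¹ • φ 0 := by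
      simp only [hys]
      rw [Fintype.sum_eq_single i fun j hj => by simp [hj], Pi.single_eq_same]
    _ = φ 0 := smul_inv_smul₀ hi _

theorem IsJointlyOnto.singleton {y : ι → Dual K V} (hy : IsJointlyOnto S y) (i : ι) :
    IsJointlyOnto S ![y i] := by
  intro φ
  obtain ⟨s, hs, hys⟩ := hy fun _ => φ 0
  exact ⟨s, hs, Fin.forall_fin_one.2 (hys i)⟩

theorem IsJointlyOnto.exists_forall_vecCons [FiniteDimensional K U] [FiniteDimensional K V]
    {k : ℕ} {y : Fin k → Dual K V} (hy : IsJointlyOnto S y) :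
    ∃ Y : Submodule K (Dual K V), finrank K Y + finrank K S ≤ finrank K (U →ₗ[K] V) + k ∧
      ∀ z ∉ Y, IsJointlyOnto S (Matrix.vecCons z y) := by
  obtain ⟨W, -, hW, honto⟩ := exists_le_forall_map_compRight_eq_top S (LinearMap.pi y).ker
  refine ⟨W.dualAnnihilator, ?_, fun z hz φ => ?_⟩
  · have hker := (LinearMap.pi y).finrank_range_add_finrank_ker
    have hrange := (LinearMap.pi y).range.finrank_le
    have hann := Subspace.finrank_add_finrank_dualAnnihilator_eq W
    rw [finrank_fin_fun] at hrange
    lia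
  · obtain ⟨s, hs, hys⟩ := hy (φ ∘ Fin.succ)
    obtain ⟨t, ⟨ht, hty⟩, hzt⟩ : φ 0 - z ∘ₗ s ∈ (S ⊓ mapsInto U _).map (LinearMap.compRight K z) :=
      honto z hz ▸ mem_top
    refine ⟨t + s, add_mem ht hs, Fin.forall_fin_succ.2 ⟨?_, fun i => ?_⟩⟩
    · rw [Matrix.cons_val_zero, LinearMap.comp_add]
      exact eq_sub_iff_add_eq.1 hzt
    · have hyt : y i ∘ₗ t = 0 := LinearMap.ext fun b => congr_fun (mem_mapsInto.1 hty b) i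
      simp [LinearMap.comp_add, hyt, hys i]

end JointlyOnto

section Agreement

variable {K U V ι : Type*} [Field K] [AddCommGroup U] [Module K U] [AddCommGroup V] [Module K V]
  {𝒮 : AffineSubspace K (U →ₗ[K] V)} [Nonempty 𝒮] {F : 𝒮 →ᵃ[K] V}

/-- Quasi-range-compatibility of `F` with respect to `D`; the definition makes sense for every
subspace `D`, the notion of the theorem being the case of a line. -/
def IsQuasiRangeCompatible (D : Submodule K V) (F : 𝒮 →ᵃ[K] V) : Prop :=
  ∀ s : 𝒮, ¬ D ≤ (s : U →ₗ[K] V).range → F s ∈ (s : U →ₗ[K] V).range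

/-- The functionals on `V` that do not distinguish `F` from the local map `s ↦ s u`. -/
def agreement (F : 𝒮 →ᵃ[K] V) (u : U) : Submodule K (Dual K V) :=
  ⨅ s : 𝒮, (Dual.eval K V (F s - (s : U →ₗ[K] V) u)).ker

variable {u : U} {y : Dual K V}

theorem mem_agreement : y ∈ agreement F u ↔ ∀ s : 𝒮, y (F s) = y ((s : U →ₗ[K] V) u) := by
  simp [agreement, sub_eq_zero]

theorem agreement_eq_top_iff :
    agreement F u = ⊤ ↔ ∀ s : 𝒮, F s = (s : U →ₗ[K] V) u := by
  simp only [agreement, iInf_eq_top, LinearMap.ker_eq_top, eval_apply_eq_zero_iff, sub_eq_zero]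

theorem apply_linear_of_mem_agreement (hy : y ∈ agreement F u) (r : 𝒮.direction) :
    y (F.linear r) = y ((r : U →ₗ[K] V) u) := by
  obtain ⟨s⟩ := ‹Nonempty 𝒮›
  have hrs := mem_agreement.1 hy (r +ᵥ s)
  simpa [mem_agreement.1 hy s] using hrs

theorem eq_of_sum_smul_mem_agreement [Fintype ι] {y : ι → Dual K V}
    (honto : IsJointlyOnto 𝒮.direction y) {c : ι → K} (hc : ∀ i, c i ≠ 0) {u : ι → U} {w : U}
    (hu : ∀ i, y i ∈ agreement F (u i)) (hw : ∑ i, c i • y i ∈ agreement F w) (i : ι) :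
    u i = w := by
  classical
  refine eval_apply_injective K (LinearMap.ext fun φ => ?_)
  obtain ⟨r, hr, hyr⟩ := honto (Pi.single i φ)
  have hy_of_ne (j : ι) (hj : j ≠ i) (b : U) : y j (r b) = 0 := by
    simpa [hj] using LinearMap.congr_fun (hyr j) b
  have hy_self (b : U) : y i (r b) = φ b := by simpa using LinearMap.congr_fun (hyr i) b
  have hsum : ∑ j, c j * y j (r (u j)) = ∑ j, c j * y j (r w) := by
    have hlin := apply_linear_of_mem_agreement hw ⟨r, hr⟩
    simpa [apply_linear_of_mem_agreement (hu _)] using hlin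
  rw [Fintype.sum_eq_single i fun j hj => by rw [hy_of_ne j hj, mul_zero],
    Fintype.sum_eq_single i fun j hj => by rw [hy_of_ne j hj, mul_zero], hy_self, hy_self] at hsum
  exact mul_left_cancel₀ (hc i) hsum

theorem eq_of_mem_agreement {v : U} (honto : IsJointlyOnto 𝒮.direction ![y])
    (hu : y ∈ agreement F u) (hv : y ∈ agreement F v) : u = v :=
  eq_of_sum_smul_mem_agreement honto (c := fun _ => 1) (fun _ => one_ne_zero) (u := fun _ => u)
    (Fin.forall_fin_one.2 hu) (by simpa using hv) 0

namespace IsQuasiRangeCompatible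

variable {D : Submodule K V} {δ : V}

theorem apply_eq_zero (hF : IsQuasiRangeCompatible D F) (hδ : δ ∈ D) (hy : y δ ≠ 0) {s : 𝒮}
    (hs : y ∘ₗ (s : U →ₗ[K] V) = 0) : y (F s) = 0 := by
  have hrange : (s : U →ₗ[K] V).range ≤ y.ker := LinearMap.range_le_ker_iff.2 hs
  exact hrange (hF s fun hD => hy (hrange (hD hδ)))

theorem exists_mem_agreement [FiniteDimensional K U] (hF : IsQuasiRangeCompatible D F)
    (hδ : δ ∈ D) (hy : y δ ≠ 0) (honto : IsJointlyOnto 𝒮.direction ![y]) :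
    ∃ u, y ∈ agreement F u := by
  obtain ⟨s₀, hs₀⟩ : ∃ s₀ : 𝒮, y ∘ₗ (s₀ : U →ₗ[K] V) = 0 := by
    obtain ⟨s⟩ := ‹Nonempty 𝒮›
    obtain ⟨r, hr, hyr⟩ := honto fun _ => -(y ∘ₗ (s : U →ₗ[K] V))
    exact ⟨(⟨r, hr⟩ : 𝒮.direction) +ᵥ s, by
      simpa [LinearMap.comp_add, add_eq_zero_iff_eq_neg] using hyr 0⟩
  have hker : ((LinearMap.compRight K y).domRestrict 𝒮.direction).ker ≤ (y ∘ₗ F.linear).ker := by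
    intro r hr
    have hyr : y ∘ₗ (r : U →ₗ[K] V) = 0 := hr
    have hyrs := hF.apply_eq_zero hδ hy (s := r +ᵥ s₀) (by simp [LinearMap.comp_add, hyr, hs₀])
    simpa [hF.apply_eq_zero hδ hy hs₀] using hyrs
  obtain ⟨ψ, hψ⟩ : y ∘ₗ F.linear ∈
      ((LinearMap.compRight K y).domRestrict 𝒮.direction).dualMap.range := by
    rw [LinearMap.range_dualMap_eq_dualAnnihilator_ker]
    exact (mem_dualAnnihilator _).2 hker
  obtain ⟨u, rfl⟩ := (evalEquiv K U).surjective ψ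
  refine ⟨u, mem_agreement.2 fun s => ?_⟩
  have hlin : y ((s - s₀ : U →ₗ[K] V) u) = y (F.linear (s -ᵥ s₀)) :=
    LinearMap.congr_fun hψ (s -ᵥ s₀)
  have hyu : y ((s₀ : U →ₗ[K] V) u) = 0 := LinearMap.congr_fun hs₀ u
  simpa [AffineMap.linearMap_vsub, hyu, hF.apply_eq_zero hδ hy hs₀] using hlin.symm

theorem exists_forall_mem_agreement [FiniteDimensional K U] [Fintype ι]
    (hF : IsQuasiRangeCompatible D F) (hδ : δ ∈ D) {y : ι → Dual K V}
    (honto : IsJointlyOnto 𝒮.direction y) (hy : ∀ i, y i δ = 1) {c : ι → K}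
    (hc : ∀ i, c i ≠ 0) (hsum : ∑ i, c i = 1) : ∃ u, ∀ i, y i ∈ agreement F u := by
  have hc₀ : c ≠ 0 := by
    rintro rfl
    simp at hsum
  have hyi (i : ι) : ∃ u, y i ∈ agreement F u :=
    hF.exists_mem_agreement hδ (hy i ▸ one_ne_zero) (honto.singleton i)
  choose u hu using hyi
  obtain ⟨w, hw⟩ := hF.exists_mem_agreement hδ (by simp [hy, hsum]) (honto.sum_smul hc₀)
  exact ⟨w, fun i => eq_of_sum_smul_mem_agreement honto hc hu hw i ▸ hu i⟩

theorem exists_mem_agreement_pair [FiniteDimensional K U] [FiniteDimensional K V]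
    (hF : IsQuasiRangeCompatible D F) (hδ : δ ∈ D) {x y : Dual K V} (hx : x δ = 1) (hy : y δ = 1)
    (honto : IsJointlyOnto 𝒮.direction ![y, x])
    (hcard : Nat.card K = 2 →
      finrank K (U →ₗ[K] V) + 3 ≤ finrank K 𝒮.direction + finrank K V) :
    ∃ u, x ∈ agreement F u ∧ y ∈ agreement F u := by
  by_cases hK : Nat.card K = 2
  · obtain ⟨Y, hYdim, hY⟩ := honto.exists_forall_vecCons
    have hY_top : Y ≠ ⊤ := by
      refine (lt_top_of_finrank_lt_finrank ?_).ne
      have := hcard hK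
      rw [Subspace.dual_finrank_eq]
      lia
    have hδ₀ : Dual.eval K V δ ≠ 0 := fun h => by simpa [hx] using LinearMap.congr_fun h x
    obtain ⟨z, hz, hzY⟩ := exists_apply_eq_one_notMem hδ₀ hY_top
    obtain ⟨u, hu⟩ := hF.exists_forall_mem_agreement hδ (hY z hzY) (c := ![1, 1, -1])
      (by simpa [Fin.forall_fin_succ, hx, hy] using hz) (by simp [Fin.forall_fin_succ])
      (by simp [Fin.sum_univ_succ])
    exact ⟨u, hu 2, hu 1⟩
  · obtain ⟨α, hα₀, hα₁⟩ := exists_ne_zero_ne_one_of_card_ne_two hK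
    obtain ⟨u, hu⟩ := hF.exists_forall_mem_agreement hδ honto (c := ![α, 1 - α])
      (by simp [Fin.forall_fin_succ, hx, hy])
      (by simp [Fin.forall_fin_succ, hα₀, sub_ne_zero, hα₁.symm]) (by simp)
    exact ⟨u, hu 1, hu 0⟩

end IsQuasiRangeCompatible

end Agreement

/-- Let `𝒮` be an affine subspace of `L(U,V)` with
`codim 𝒮 ≤ dim V − 2`, and `codim 𝒮 ≤ dim V − 3` if `K` has exactly 2 elements. Then
every quasi-range-compatible affine map `F : 𝒮 → V` is local. -/
theorem quasi_range_compatible_affine_map_is_local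
    (K U V : Type*) [Field K]
    [AddCommGroup U] [Module K U] [FiniteDimensional K U]
    [AddCommGroup V] [Module K V] [FiniteDimensional K V]
    (𝒮 : AffineSubspace K (U →ₗ[K] V)) [Nonempty ↥𝒮]
    (h1 : Module.finrank K (U →ₗ[K] V) + 2 ≤
      Module.finrank K 𝒮.direction + Module.finrank K V)
    (h2 : Nat.card K = 2 → Module.finrank K (U →ₗ[K] V) + 3 ≤
      Module.finrank K 𝒮.direction + Module.finrank K V)
    (F : ↥𝒮 →ᵃ[K] V)
    (hq : ∃ D : Submodule K V, Module.finrank K D = 1 ∧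
      ∀ s : ↥𝒮, ¬ D ≤ LinearMap.range (s : U →ₗ[K] V) →
        F s ∈ LinearMap.range (s : U →ₗ[K] V)) :
    ∃ x : U, ∀ s : ↥𝒮, F s = (s : U →ₗ[K] V) x := by
  obtain ⟨D, hD, hF : IsQuasiRangeCompatible D F⟩ := hq
  obtain ⟨δ, hδD, hδ⟩ := D.exists_mem_ne_zero_of_ne_bot (by rintro rfl; simp at hD)
  have hδ_eval : Dual.eval K V δ ≠ 0 := (eval_apply_eq_zero_iff K δ).not.2 hδ
  have hempty : IsJointlyOnto 𝒮.direction (![] : Fin 0 → Dual K V) :=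
    fun _ => ⟨0, zero_mem _, fun i => i.elim0⟩
  have hdual := Subspace.dual_finrank_eq (K := K) (V := V)
  obtain ⟨X, hXdim, hX⟩ := hempty.exists_forall_vecCons
  obtain ⟨x, hx, hxX⟩ := exists_apply_eq_one_notMem hδ_eval
    (lt_top_of_finrank_lt_finrank (s := X) (by lia)).ne
  obtain ⟨u, hu⟩ := hF.exists_mem_agreement hδD (ne_of_eq_of_ne hx one_ne_zero) (hX x hxX)
  obtain ⟨Y, hYdim, hY⟩ := (hX x hxX).exists_forall_vecCons
  refine ⟨u, agreement_eq_top_iff.1 <| eq_top_of_forall_apply_eq_one_notMem_mem hδ_eval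
    (lt_top_of_finrank_lt_finrank (s := Y) (by lia)).ne (fun hK => by have := h2 hK; lia)
    fun y hy hyY => ?_⟩
  obtain ⟨v, hxv, hyv⟩ := hF.exists_mem_agreement_pair hδD hx hy (hY y hyY) h2
  rwa [eq_of_mem_agreement (hX x hxX) hu hxv]
end
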